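/- Newton's theorem: for a nonnegative spherically symmetric integrable function σ on ℝ³ and any x ∈ ℝ³ \ {0}, ∫_{ℝ³} σ(y)/|x−y| dy = ∫_{ℝ³} σ(y)/max(|x|,|y|) dy. -/

import Mathlib

open MeasureTheory

/-!
Archimedes: on a sphere of radius `r` about the origin of a three-dimensional Euclidean space, the
height `z` along a fixed axis has constant density `2πr` on `(-r, r)`. If the axis points towards
`x ≠ 0`, then `‖x - y‖⁻¹` equals `(‖x‖² + r² - 2‖x‖z)^(-1/2)` for `y` on that sphere. This is the
derivative of `-(‖x‖² + r² - 2‖x‖z)^(1/2) / ‖x‖` in `z`, so its integral over `(-r, r)` is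
`((‖x‖ + r) - |‖x‖ - r|) / ‖x‖ = 2r / max ‖x‖ r`. Hence `‖x - y‖⁻¹` and `(max ‖x‖ ‖y‖)⁻¹` are the
densities of two measures with the same image under the norm, and the integral of a radial function
depends on that image only.
-/

open Module Set
open scoped ENNReal Real RealInnerProductSpace

section PushforwardOfDensity

variable {α β G : Type*} [MeasurableSpace α] [MeasurableSpace β] {μ : Measure α}
  [NormedAddCommGroup G] [NormedSpace ℝ G] {w : α → ℝ} {p : α → β} {f : β → G}

lemma integrable_map_withDensity_ofReal_iff (hw : Measurable w) (hw0 : ∀ a, 0 ≤ w a)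
    (hp : Measurable p) (hf : StronglyMeasurable f) :
    Integrable f ((μ.withDensity fun a ↦ .ofReal (w a)).map p) ↔
      Integrable (fun a ↦ w a • f (p a)) μ := by
  rw [integrable_map_measure hf.aestronglyMeasurable hp.aemeasurable,
    integrable_withDensity_iff_integrable_smul' (by fun_prop) (by simp)]
  simp only [ENNReal.toReal_ofReal (hw0 _), Function.comp_apply]

lemma integral_map_withDensity_ofReal (hw : Measurable w) (hw0 : ∀ a, 0 ≤ w a)
    (hp : Measurable p) (hf : StronglyMeasurable f) :
    ∫ b, f b ∂(μ.withDensity fun a ↦ .ofReal (w a)).map p = ∫ a, w a • f (p a) ∂μ := by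
  rw [integral_map hp.aemeasurable hf.aestronglyMeasurable,
    integral_withDensity_eq_integral_toReal_smul (by fun_prop) (by simp)]
  simp only [ENNReal.toReal_ofReal (hw0 _)]

end PushforwardOfDensity

section RealIntegrals

lemma lintegral_Ioo_deriv_of_nonneg {f f' : ℝ → ℝ} {a b : ℝ} (hab : a ≤ b)
    (hf : ContinuousOn f (Icc a b)) (hf' : ∀ t ∈ Ioo a b, HasDerivAt f (f' t) t)
    (hf'0 : ∀ t ∈ Ioo a b, 0 ≤ f' t) :
    ∫⁻ t in Ioo a b, .ofReal (f' t) = ENNReal.ofReal (f b - f a) := by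
  have hint : IntegrableOn f' (Ioc a b) :=
    intervalIntegral.integrableOn_deriv_of_nonneg hf hf' hf'0
  rw [← intervalIntegral.integral_eq_sub_of_hasDerivAt_of_le hab hf hf'
      ((intervalIntegrable_iff_integrableOn_Ioc_of_le hab).2 hint),
    intervalIntegral.integral_of_le hab, ← restrict_Ioo_eq_restrict_Ioc,
    ofReal_integral_eq_lintegral_ofReal (hint.mono_set Ioo_subset_Ioc_self)
      ((ae_restrict_mem measurableSet_Ioo).mono hf'0)]

lemma lintegral_Ioi_comp_sq (g : ℝ → ℝ≥0∞) :
    ∫⁻ r in Ioi (0 : ℝ), .ofReal (2 * r) * g (r ^ 2) = ∫⁻ t in Ioi 0, g t := by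
  have himage : (fun r : ℝ ↦ r ^ 2) '' Ioi 0 = Ioi 0 := by
    ext t
    refine ⟨?_, fun ht ↦ ⟨√t, Real.sqrt_pos.2 ht, Real.sq_sqrt (le_of_lt ht)⟩⟩
    rintro ⟨r, hr, rfl⟩
    exact pow_pos (mem_Ioi.1 hr) 2
  have hmono : MonotoneOn (fun r : ℝ ↦ r ^ 2) (Ioi 0) := fun r hr s _ hrs ↦
    pow_le_pow_left₀ (le_of_lt hr) hrs 2
  conv_rhs => rw [← himage]
  rw [lintegral_image_eq_lintegral_deriv_mul_of_monotoneOn measurableSet_Ioi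
    (fun r _ ↦ by simpa using (hasDerivAt_pow 2 r).hasDerivWithinAt) hmono]

lemma lintegral_comp_sq_add_sq {g : ℝ → ℝ≥0∞} (hg : Measurable g) :
    ∫⁻ w : ℝ × ℝ, g (w.1 ^ 2 + w.2 ^ 2) = .ofReal π * ∫⁻ t in Ioi 0, g t := by
  have hcircle (r θ : ℝ) : (r * Real.cos θ) ^ 2 + (r * Real.sin θ) ^ 2 = r ^ 2 := by
    linear_combination r ^ 2 * Real.sin_sq_add_cos_sq θ
  rw [← lintegral_comp_polarCoord_symm, polarCoord_target, Measure.volume_eq_prod,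
    setLIntegral_prod _ (by simp only [polarCoord_symm_apply, smul_eq_mul]; fun_prop),
    ← lintegral_Ioi_comp_sq g, ← lintegral_const_mul _ (by fun_prop)]
  refine setLIntegral_congr_fun measurableSet_Ioi fun r (hr : 0 < r) ↦ ?_
  simp only [polarCoord_symm_apply, smul_eq_mul, hcircle, setLIntegral_const, Real.volume_Ioo]
  rw [mul_right_comm, ← mul_assoc, ← ENNReal.ofReal_mul hr.le,
    ← ENNReal.ofReal_mul Real.pi_pos.le]
  ring_nf

lemma lintegral_lintegral_Ioi_sq_add {H : ℝ × ℝ → ℝ≥0∞} (hH : Measurable H) :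
    ∫⁻ z, ∫⁻ t in Ioi 0, H (z ^ 2 + t, z) =
      ∫⁻ s in Ioi 0, ∫⁻ z in Ioo (-√s) (√s), H (s, z) := by
  have htranslate (z : ℝ) : ∫⁻ t in Ioi 0, H (z ^ 2 + t, z) =
      ∫⁻ s in Ioi 0, (Ioi (z ^ 2)).indicator (fun s ↦ H (s, z)) s := by
    have hpre := (measurePreserving_add_left volume (z ^ 2)).setLIntegral_comp_preimage
      measurableSet_Ioi (f := fun s ↦ H (s, z)) (by fun_prop) (s := Ioi (z ^ 2))
    rw [setLIntegral_indicator measurableSet_Ioi,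
      inter_eq_left.2 (Ioi_subset_Ioi (sq_nonneg z)), ← hpre]
    simp
  have hslice (s z : ℝ) : (Ioi (z ^ 2)).indicator (fun s ↦ H (s, z)) s =
      (Ioo (-√s) (√s)).indicator (fun z ↦ H (s, z)) z := by
    simp only [indicator_apply, mem_Ioi, mem_Ioo, Real.sq_lt]
  have hregion : MeasurableSet {q : ℝ × ℝ | q.1 ^ 2 < q.2} :=
    measurableSet_lt (by fun_prop) (by fun_prop)
  simp_rw [htranslate]
  rw [lintegral_lintegral_swap
    (((hH.comp measurable_swap).indicator hregion).aemeasurable.congr (.of_forall fun q ↦ rfl))]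
  simp_rw [hslice, lintegral_indicator measurableSet_Ioo]

lemma lintegral_Ioo_inv_sqrt {a r : ℝ} (ha : 0 < a) (hr : 0 ≤ r) :
    ∫⁻ z in Ioo (-r) r, .ofReal (√(a ^ 2 + r ^ 2 - 2 * a * z))⁻¹ =
      ENNReal.ofReal (2 * r / max a r) := by
  have hpos {z : ℝ} (hz : z ∈ Ioo (-r) r) : 0 < a ^ 2 + r ^ 2 - 2 * a * z := by
    nlinarith [mul_pos ha (sub_pos.2 hz.2), sq_nonneg (a - r)]
  have hderiv (z : ℝ) (hz : z ∈ Ioo (-r) r) :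
      HasDerivAt (fun z ↦ -√(a ^ 2 + r ^ 2 - 2 * a * z) / a)
        (√(a ^ 2 + r ^ 2 - 2 * a * z))⁻¹ z := by
    refine (((((hasDerivAt_id z).const_mul (2 * a)).const_sub (a ^ 2 + r ^ 2)).sqrt
      (hpos hz).ne').neg.div_const a).congr_deriv ?_
    have := Real.sqrt_pos.2 (hpos hz)
    simp only [id]
    field_simp
  rw [lintegral_Ioo_deriv_of_nonneg (neg_le_self hr) (by fun_prop) hderiv
      fun _ _ ↦ by positivity,
    show a ^ 2 + r ^ 2 - 2 * a * r = (a - r) ^ 2 by ring,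
    show a ^ 2 + r ^ 2 - 2 * a * -r = (a + r) ^ 2 by ring,
    Real.sqrt_sq_eq_abs, Real.sqrt_sq (by positivity)]
  congr 1
  rcases le_total a r with h | h
  · have : 0 < r := ha.trans_le h
    rw [abs_of_nonpos (by linarith), max_eq_right h]
    field_simp
    ring
  · rw [abs_of_nonneg (by linarith), max_eq_left h]
    field_simp
    ring

end RealIntegrals

lemma exists_orthonormalBasis_apply_eq {𝕜 E ι : Type*} [RCLike 𝕜] [NormedAddCommGroup E]
    [InnerProductSpace 𝕜 E] [FiniteDimensional 𝕜 E] [Fintype ι]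
    (hE : finrank 𝕜 E = Fintype.card ι) (i : ι) {u : E} (hu : ‖u‖ = 1) :
    ∃ b : OrthonormalBasis ι 𝕜 E, b i = u := by
  obtain ⟨b, hb⟩ := Orthonormal.exists_orthonormalBasis_extension_of_card_eq (𝕜 := 𝕜) hE
    (v := fun _ ↦ u) (s := {i}) ⟨fun _ ↦ hu, fun j k hjk ↦ (hjk (Subsingleton.elim j k)).elim⟩
  exact ⟨b, hb i rfl⟩

lemma integrable_inv_max_norm_smul {E G : Type*} [NormedAddCommGroup E] [MeasurableSpace E]
    [OpensMeasurableSpace E] [NormedAddCommGroup G] [NormedSpace ℝ G] {μ : Measure E} {σ : E → G}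
    (hσ : Integrable σ μ) {x : E} (hx : x ≠ 0) :
    Integrable (fun y ↦ (max ‖x‖ ‖y‖)⁻¹ • σ y) μ := by
  refine hσ.bdd_smul ‖x‖⁻¹ (by fun_prop) (.of_forall fun y ↦ ?_)
  rw [Real.norm_of_nonneg (by positivity)]
  exact inv_anti₀ (norm_pos_iff.2 hx) (le_max_left _ _)

section EuclideanThreeSpace

variable {E : Type*} [NormedAddCommGroup E] [InnerProductSpace ℝ E] [FiniteDimensional ℝ E]
  [MeasurableSpace E] [BorelSpace E]

lemma lintegral_norm_sq_inner (b : OrthonormalBasis (Fin 3) ℝ E) {F : ℝ × ℝ → ℝ≥0∞}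
    (hF : Measurable F) :
    ∫⁻ y : E, F (‖y‖ ^ 2, ⟪b 0, y⟫) =
      .ofReal π * ∫⁻ s in Ioi 0, ∫⁻ z in Ioo (-√s) (√s), F (s, z) := by
  have hcoord : MeasurePreserving fun y : E ↦ (b.repr y).ofLp :=
    (PiLp.volume_preserving_ofLp (Fin 3)).comp b.measurePreserving_repr
  calc
    _ = ∫⁻ y : E, F (b.repr y 0 ^ 2 + (b.repr y 1 ^ 2 + b.repr y 2 ^ 2), b.repr y 0) := by
      refine lintegral_congr fun y ↦ ?_
      rw [← b.repr.norm_map y, EuclideanSpace.real_norm_sq_eq, Fin.sum_univ_three, add_assoc,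
        b.repr_apply_apply y 0]
    _ = ∫⁻ v : Fin 3 → ℝ, F (v 0 ^ 2 + (v 1 ^ 2 + v 2 ^ 2), v 0) :=
      hcoord.lintegral_comp (f := fun v ↦ F (v 0 ^ 2 + (v 1 ^ 2 + v 2 ^ 2), v 0)) (by fun_prop)
    _ = ∫⁻ p : ℝ × (Fin 2 → ℝ), F (p.1 ^ 2 + (p.2 0 ^ 2 + p.2 1 ^ 2), p.1) :=
      (volume_preserving_piFinSuccAbove (fun _ : Fin 3 ↦ ℝ) 0).lintegral_comp
        (f := fun p ↦ F (p.1 ^ 2 + (p.2 0 ^ 2 + p.2 1 ^ 2), p.1)) (by fun_prop)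
    _ = ∫⁻ z : ℝ, ∫⁻ w : Fin 2 → ℝ, F (z ^ 2 + (w 0 ^ 2 + w 1 ^ 2), z) := by
      rw [Measure.volume_eq_prod, lintegral_prod _ (by fun_prop)]
    _ = ∫⁻ z : ℝ, ∫⁻ w : ℝ × ℝ, F (z ^ 2 + (w.1 ^ 2 + w.2 ^ 2), z) :=
      lintegral_congr fun z ↦ (volume_preserving_finTwoArrow ℝ).lintegral_comp
        (f := fun w ↦ F (z ^ 2 + (w.1 ^ 2 + w.2 ^ 2), z)) (by fun_prop)
    _ = ∫⁻ z : ℝ, .ofReal π * ∫⁻ t in Ioi 0, F (z ^ 2 + t, z) :=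
      lintegral_congr fun z ↦ lintegral_comp_sq_add_sq (g := fun t ↦ F (z ^ 2 + t, z))
        (by fun_prop)
    _ = _ := by
      rw [lintegral_const_mul' _ _ ENNReal.ofReal_ne_top, lintegral_lintegral_Ioi_sq_add hF]

lemma lintegral_norm_inner (hE : finrank ℝ E = 3) {u : E} (hu : ‖u‖ = 1) {F : ℝ × ℝ → ℝ≥0∞}
    (hF : Measurable F) :
    ∫⁻ y : E, F (‖y‖, ⟪u, y⟫) =
      ∫⁻ r in Ioi 0, .ofReal (2 * π * r) * ∫⁻ z in Ioo (-r) r, F (r, z) := by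
  obtain ⟨b, rfl⟩ := exists_orthonormalBasis_apply_eq (ι := Fin 3) (by simpa using hE) 0 hu
  have h := lintegral_norm_sq_inner b (F := fun p ↦ F (√p.1, p.2)) (by fun_prop)
  simp only [Real.sqrt_sq (norm_nonneg _)] at h
  rw [h, ← lintegral_Ioi_comp_sq, ← lintegral_const_mul' _ _ ENNReal.ofReal_ne_top]
  refine setLIntegral_congr_fun measurableSet_Ioi fun r (hr : 0 < r) ↦ ?_
  simp only [Real.sqrt_sq hr.le]
  rw [← mul_assoc, ← ENNReal.ofReal_mul Real.pi_pos.le]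
  ring_nf

lemma lintegral_inv_norm_sub_mul_comp_norm (hE : finrank ℝ E = 3) (x : E) {g : ℝ → ℝ≥0∞}
    (hg : Measurable g) :
    ∫⁻ y : E, .ofReal ‖x - y‖⁻¹ * g ‖y‖ = ∫⁻ y : E, .ofReal (max ‖x‖ ‖y‖)⁻¹ * g ‖y‖ := by
  rcases eq_or_ne x 0 with rfl | hx
  · simp
  set a := ‖x‖
  have ha : 0 < a := norm_pos_iff.2 hx
  set u := a⁻¹ • x with hu_def
  have hu : ‖u‖ = 1 := norm_smul_inv_norm hx
  have hdist (y : E) : ‖x - y‖ = √(a ^ 2 + ‖y‖ ^ 2 - 2 * a * ⟪u, y⟫) := by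
    rw [hu_def, real_inner_smul_left, mul_assoc, mul_inv_cancel_left₀ ha.ne', add_sub_right_comm,
      ← norm_sub_sq_real, Real.sqrt_sq (norm_nonneg _)]
  simp_rw [hdist]
  rw [lintegral_norm_inner hE hu
      (F := fun p ↦ ENNReal.ofReal (√(a ^ 2 + p.1 ^ 2 - 2 * a * p.2))⁻¹ * g p.1) (by fun_prop),
    lintegral_norm_inner hE hu (F := fun p ↦ ENNReal.ofReal (max a p.1)⁻¹ * g p.1) (by fun_prop)]
  refine setLIntegral_congr_fun measurableSet_Ioi fun r (hr : 0 < r) ↦ ?_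
  dsimp only
  rw [lintegral_mul_const _ (by fun_prop), lintegral_Ioo_inv_sqrt ha hr.le, setLIntegral_const,
    Real.volume_Ioo, mul_right_comm _ (g r), ← ENNReal.ofReal_mul (by positivity)]
  ring_nf

lemma map_norm_withDensity_inv_norm_sub (hE : finrank ℝ E = 3) (x : E) :
    ((volume : Measure E).withDensity fun y ↦ .ofReal ‖x - y‖⁻¹).map norm =
      ((volume : Measure E).withDensity fun y ↦ .ofReal (max ‖x‖ ‖y‖)⁻¹).map norm := by
  refine Measure.ext_of_lintegral _ fun g hg ↦ ?_
  rw [lintegral_map hg measurable_norm, lintegral_map hg measurable_norm,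
    lintegral_withDensity_eq_lintegral_mul _ (by fun_prop) (by fun_prop),
    lintegral_withDensity_eq_lintegral_mul _ (by fun_prop) (by fun_prop)]
  exact lintegral_inv_norm_sub_mul_comp_norm hE x hg

variable {G : Type*} [NormedAddCommGroup G] [NormedSpace ℝ G] {σ : E → G}

theorem newton_theorem_general (hE : finrank ℝ E = 3) (hσm : StronglyMeasurable σ)
    (hσrad : ∀ y z, ‖y‖ = ‖z‖ → σ y = σ z) (x : E)
    (hσint : Integrable fun y ↦ (max ‖x‖ ‖y‖)⁻¹ • σ y) :
    Integrable (fun y ↦ ‖x - y‖⁻¹ • σ y) ∧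
      ∫ y, ‖x - y‖⁻¹ • σ y = ∫ y, (max ‖x‖ ‖y‖)⁻¹ • σ y := by
  have : Nontrivial E := nontrivial_of_finrank_pos (R := ℝ) (by lia)
  obtain ⟨u, hu⟩ := exists_norm_eq E zero_le_one
  obtain ⟨f, hf, hσf⟩ : ∃ f : ℝ → G, StronglyMeasurable f ∧ ∀ y, σ y = f ‖y‖ :=
    ⟨fun r ↦ σ (r • u), hσm.comp_measurable (by fun_prop),
      fun y ↦ hσrad _ _ (by simp [norm_smul, hu])⟩
  simp only [hσf] at hσint ⊢
  have hsub0 (y : E) : 0 ≤ ‖x - y‖⁻¹ := by positivity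
  have hmax0 (y : E) : 0 ≤ (max ‖x‖ ‖y‖)⁻¹ := by positivity
  rw [← integrable_map_withDensity_ofReal_iff (by fun_prop) hmax0 measurable_norm hf] at hσint
  rw [← integrable_map_withDensity_ofReal_iff (by fun_prop) hsub0 measurable_norm hf,
    ← integral_map_withDensity_ofReal (by fun_prop) hsub0 measurable_norm hf,
    ← integral_map_withDensity_ofReal (by fun_prop) hmax0 measurable_norm hf,
    map_norm_withDensity_inv_norm_sub hE x]
  exact ⟨hσint, rfl⟩

end EuclideanThreeSpace

/-- Newton's theorem: for a nonnegative spherically symmetric integrable `σ` on `ℝ³`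
(with `∫σ(y)|y|⁻¹dy < ∞`) and any `x ≠ 0`,
`∫σ(y)|x−y|⁻¹dy = ∫σ(y)/max(|x|,|y|) dy`. -/
theorem newton_theorem (σ : EuclideanSpace ℝ (Fin 3) → ℝ)
    (hσm : Measurable σ) (hσ0 : ∀ y, 0 ≤ σ y)
    (hσrad : ∀ x y, ‖x‖ = ‖y‖ → σ x = σ y)
    (hσint : Integrable σ) (hσint' : Integrable (fun y => σ y / ‖y‖))
    (x : EuclideanSpace ℝ (Fin 3)) (hx : x ≠ 0) :
    ∫ y, σ y / ‖x - y‖ = ∫ y, σ y / max ‖x‖ ‖y‖ := by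
  simpa only [smul_eq_mul, ← div_eq_inv_mul] using
    (newton_theorem_general finrank_euclideanSpace_fin hσm.stronglyMeasurable hσrad x
      (integrable_inv_max_norm_smul hσint hx)).2
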